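/- CPO trust-region safety guarantee: suppose π_{k+1} satisfies the surrogate cost constraint J_C(π_k) + (1/(1−γ)) E_{s∼d^{π_k}, a∼π_{k+1}}[A_C^{π_k}(s,a)] ≤ d and the trust region Ē_{s∼d^{π_k}}[D_KL(π_{k+1}(·|s) ‖ π_k(·|s))] ≤ δ. Then J_C(π_{k+1}) ≤ d + √(2δ) γ ε_C^{π_{k+1}} / (1−γ)², where ε_C^{π_{k+1}} = max_s |E_{a∼π_{k+1}}[A_C^{π_k}(s,a)]|. -/

import Mathlib

open scoped BigOperators

/-! Let `K`, `K'` be the state chains of the old and new policy and `g s` the mean of the old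
advantage under the new policy at `s`. The difference `W` of the two value functions satisfies
`W = g + γ K' W`, so `(1 - γ) ‖W‖∞ ≤ ‖g‖∞`. Pairing `W` with the flow equation
`d = (1 - γ) ρ + γ d K` of the visitation distribution gives
`(1 - γ) ⟨ρ, W⟩ = ⟨d, g⟩ + γ ⟨d, (K' - K) W⟩`. The first term is the surrogate; by Hölder the last
one is at most `2 γ ‖W‖∞` times the `d`-average of the total variation distance between the
policies, which Pinsker's and Jensen's inequalities bound by `√(δ / 2)`. -/

section Pinsker

open InformationTheory Set

lemma convexOn_two_mul_add_four_mul_klFun_sub_sq :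
    ConvexOn ℝ (Ici 0) fun x ↦ (2 * x + 4) * klFun x - 3 * (x - 1) ^ 2 := by
  refine convexOn_of_hasDerivWithinAt2_nonneg (convex_Ici 0)
    (f' := fun x ↦ 2 * klFun x + (2 * x + 4) * Real.log x - 6 * (x - 1))
    (f'' := fun x ↦ 4 * (Real.log x - (1 - x⁻¹))) (by fun_prop) ?_ ?_ ?_
  all_goals
    intro x hx
    rw [interior_Ici, mem_Ioi] at hx
  · have h := ((((hasDerivAt_id x).const_mul 2).add_const 4).mul (hasDerivAt_klFun hx.ne')).sub
      ((((hasDerivAt_id x).sub_const 1).pow 2).const_mul 3)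
    exact (h.congr_deriv (by simp only [id_eq]; ring)).hasDerivWithinAt
  · have h := (((hasDerivAt_klFun hx.ne').const_mul 2).add
      ((((hasDerivAt_id x).const_mul 2).add_const 4).mul (Real.hasDerivAt_log hx.ne'))).sub
      (((hasDerivAt_id x).sub_const 1).const_mul 6)
    exact (h.congr_deriv (by simp only [id_eq]; field_simp; ring)).hasDerivWithinAt
  · linarith [Real.one_sub_inv_le_log_of_pos hx]

lemma three_mul_sub_one_sq_le_mul_klFun {x : ℝ} (hx : 0 ≤ x) :
    3 * (x - 1) ^ 2 ≤ (2 * x + 4) * klFun x := by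
  have hderiv : HasDerivAt (fun x ↦ (2 * x + 4) * klFun x - 3 * (x - 1) ^ 2) 0 1 := by
    have hid := hasDerivAt_id (1 : ℝ)
    have h := (((hid.const_mul 2).add_const 4).mul (hasDerivAt_klFun one_ne_zero)).sub
      (((hid.sub_const 1).pow 2).const_mul 3)
    exact h.congr_deriv (by simp [klFun_one])
  have hmin := convexOn_two_mul_add_four_mul_klFun_sub_sq.isMinOn_of_rightDeriv_eq_zero
    (x := 1) (by simp) (hderiv.hasDerivWithinAt.derivWithin (uniqueDiffWithinAt_Ioi 1))
  have h := isMinOn_iff.1 hmin x hx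
  rw [klFun_one] at h
  linarith

lemma sub_sq_le_mul_klFun_div {p q : ℝ} (hp : 0 ≤ p) (hq : 0 ≤ q) (hpq : q = 0 → p = 0) :
    (p - q) ^ 2 ≤ (2 * p + 4 * q) / 3 * (q * klFun (p / q)) := by
  rcases hq.eq_or_lt' with rfl | hq_pos
  · simp [hpq rfl]
  calc (p - q) ^ 2 = q ^ 2 / 3 * (3 * (p / q - 1) ^ 2) := by field_simp
    _ ≤ q ^ 2 / 3 * ((2 * (p / q) + 4) * klFun (p / q)) := by
      refine mul_le_mul_of_nonneg_left ?_ (by positivity)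
      exact three_mul_sub_one_sq_le_mul_klFun (by positivity)
    _ = (2 * p + 4 * q) / 3 * (q * klFun (p / q)) := by field_simp

variable {α : Type*} [Fintype α] {p q : α → ℝ}

/-- Kullback–Leibler divergence `D_KL(p ‖ q)` of weight vectors on a finite type. It is meaningful
only if `p` vanishes wherever `q` does, since a term with `q a = 0` contributes `0`, not `∞`. -/
noncomputable def discreteKL (p q : α → ℝ) : ℝ :=
  ∑ a, p a * Real.log (p a / q a)

/-- Total variation distance of weight vectors on a finite type, normalised as half the `ℓ¹`
distance. -/
noncomputable def discreteTV (p q : α → ℝ) : ℝ :=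
  (∑ a, |p a - q a|) / 2

lemma discreteTV_nonneg (p q : α → ℝ) : 0 ≤ discreteTV p q := by
  unfold discreteTV
  positivity

lemma sum_mul_klFun_div (hpq : ∀ a, q a = 0 → p a = 0) :
    ∑ a, q a * klFun (p a / q a) = discreteKL p q + ∑ a, q a - ∑ a, p a := by
  rw [discreteKL, ← Finset.sum_add_distrib, ← Finset.sum_sub_distrib]
  refine Finset.sum_congr rfl fun a _ ↦ ?_
  by_cases hq : q a = 0
  · simp [hq, hpq a hq]
  · rw [klFun_apply]
    field_simp

theorem discreteTV_sq_le_discreteKL_div_two (hp : p ∈ stdSimplex ℝ α) (hq : q ∈ stdSimplex ℝ α)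
    (hpq : ∀ a, q a = 0 → p a = 0) : discreteTV p q ^ 2 ≤ discreteKL p q / 2 := by
  have hKL : ∑ a, q a * klFun (p a / q a) = discreteKL p q := by
    rw [sum_mul_klFun_div hpq, hp.2, hq.2, add_sub_cancel_right]
  have hweight : ∑ a, (2 * p a + 4 * q a) / 3 = 2 := by
    rw [← Finset.sum_div, Finset.sum_add_distrib, ← Finset.mul_sum, ← Finset.mul_sum, hp.2, hq.2]
    norm_num
  have hCS : (∑ a, |p a - q a|) ^ 2
      ≤ (∑ a, (2 * p a + 4 * q a) / 3) * ∑ a, q a * klFun (p a / q a) := by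
    refine Finset.sum_sq_le_sum_mul_sum_of_sq_le_mul _ (fun a _ ↦ ?_) (fun a _ ↦ ?_) fun a _ ↦ ?_
    · linarith [hp.1 a, hq.1 a]
    · exact mul_nonneg (hq.1 a) (klFun_nonneg (div_nonneg (hp.1 a) (hq.1 a)))
    · rw [sq_abs]
      exact sub_sq_le_mul_klFun_div (hp.1 a) (hq.1 a) (hpq a)
  rw [hweight, hKL] at hCS
  rw [discreteTV, div_pow]
  linarith

theorem sum_mul_discreteTV_le_sqrt {ι : Type*} [Fintype ι] {w : ι → ℝ} {p q : ι → α → ℝ} {δ : ℝ}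
    (hw : w ∈ stdSimplex ℝ ι) (hp : ∀ i, p i ∈ stdSimplex ℝ α) (hq : ∀ i, q i ∈ stdSimplex ℝ α)
    (hpq : ∀ i a, q i a = 0 → p i a = 0) (hKL : ∑ i, w i * discreteKL (p i) (q i) ≤ δ) :
    ∑ i, w i * discreteTV (p i) (q i) ≤ √(δ / 2) := by
  have pinsker i := discreteTV_sq_le_discreteKL_div_two (hp i) (hq i) (hpq i)
  calc ∑ i, w i * discreteTV (p i) (q i)
      ≤ ∑ i, w i • √(discreteKL (p i) (q i) / 2) :=
        Finset.sum_le_sum fun i _ ↦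
          mul_le_mul_of_nonneg_left (Real.le_sqrt_of_sq_le (pinsker i)) (hw.1 i)
    _ ≤ √(∑ i, w i • (discreteKL (p i) (q i) / 2)) :=
        Real.strictConcaveOn_sqrt.concaveOn.le_map_sum (fun i _ ↦ hw.1 i) hw.2
          fun i _ ↦ (sq_nonneg _).trans (pinsker i)
    _ ≤ √(δ / 2) := by
        simp only [smul_eq_mul, mul_div_assoc', ← Finset.sum_div]
        gcongr

end Pinsker

section StochasticMatrix

open Matrix

variable {m n : Type*} [Fintype m] [Fintype n] {p : n → ℝ} {K : Matrix m n ℝ}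

lemma abs_dotProduct_le_sum_abs_mul_norm (p f : n → ℝ) : |p ⬝ᵥ f| ≤ (∑ i, |p i|) * ‖f‖ :=
  calc |p ⬝ᵥ f| ≤ ∑ i, |p i * f i| := Finset.abs_sum_le_sum_abs _ _
    _ ≤ ∑ i, |p i| * ‖f‖ := by
      gcongr with i
      rw [abs_mul]
      gcongr
      exact norm_le_pi_norm f i
    _ = (∑ i, |p i|) * ‖f‖ := (Finset.sum_mul ..).symm

lemma abs_sub_dotProduct_le_discreteTV (p q f : n → ℝ) :
    |(p - q) ⬝ᵥ f| ≤ 2 * discreteTV p q * ‖f‖ := by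
  rw [discreteTV, mul_div_cancel₀ _ two_ne_zero]
  exact abs_dotProduct_le_sum_abs_mul_norm (p - q) f

lemma sum_abs_of_mem_stdSimplex (hp : p ∈ stdSimplex ℝ n) : ∑ i, |p i| = 1 := by
  simp only [abs_of_nonneg (hp.1 _), hp.2]

lemma norm_mulVec_le_of_mem_stdSimplex (hK : ∀ i, K i ∈ stdSimplex ℝ n) (f : n → ℝ) :
    ‖K *ᵥ f‖ ≤ ‖f‖ := by
  refine (pi_norm_le_iff_of_nonneg (norm_nonneg f)).2 fun i ↦ ?_
  have h := abs_dotProduct_le_sum_abs_mul_norm (K i) f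
  rwa [sum_abs_of_mem_stdSimplex (hK i), one_mul] at h

lemma sum_vecMul_of_row_sum_eq_one (hK : ∀ i, ∑ j, K i j = 1) (w : m → ℝ) :
    ∑ j, (w ᵥ* K) j = ∑ i, w i := by
  simp only [vecMul, dotProduct]
  rw [Finset.sum_comm]
  simp only [← Finset.mul_sum, hK, mul_one]

lemma vecMul_mem_stdSimplex {w : m → ℝ} (hw : w ∈ stdSimplex ℝ m)
    (hK : ∀ i, K i ∈ stdSimplex ℝ n) : w ᵥ* K ∈ stdSimplex ℝ n :=
  ⟨fun j ↦ Finset.sum_nonneg fun i _ ↦ mul_nonneg (hw.1 i) ((hK i).1 j),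
    (sum_vecMul_of_row_sum_eq_one (fun i ↦ (hK i).2) w).trans hw.2⟩

lemma sum_abs_vecMul_le_of_mem_stdSimplex (hK : ∀ i, K i ∈ stdSimplex ℝ n) (w : m → ℝ) :
    ∑ j, |(w ᵥ* K) j| ≤ ∑ i, |w i| :=
  calc ∑ j, |(w ᵥ* K) j| ≤ ∑ j, ((fun i ↦ |w i|) ᵥ* K) j := by
        gcongr with j
        refine (Finset.abs_sum_le_sum_abs _ _).trans_eq (Finset.sum_congr rfl fun i _ ↦ ?_)
        rw [abs_mul, abs_of_nonneg ((hK i).1 j)]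
    _ = ∑ i, |w i| := sum_vecMul_of_row_sum_eq_one (fun i ↦ (hK i).2) _

end StochasticMatrix

section DiscountedChain

open Matrix

variable {S : Type*} [Fintype S] {γ : ℝ} {K K' : Matrix S S ℝ} {ρ d c V V' : S → ℝ}

/-- `V` is the `γ`-discounted value function of the chain `K` with cost `c`, expressed by its
Bellman equation. -/
def IsDiscountedValue (γ : ℝ) (K : Matrix S S ℝ) (c V : S → ℝ) : Prop :=
  V = c + γ • (K *ᵥ V)

/-- `d` is the `γ`-discounted visitation distribution of the chain `K` started from `ρ`, normalised
to total mass one and expressed by its flow equation. -/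
def IsDiscountedVisitation (γ : ℝ) (ρ : S → ℝ) (K : Matrix S S ℝ) (d : S → ℝ) : Prop :=
  d = (1 - γ) • ρ + γ • (d ᵥ* K)

lemma IsDiscountedValue.sub_of_bellman_residual (hV' : IsDiscountedValue γ K c V') (V : S → ℝ) :
    IsDiscountedValue γ K (c + γ • (K *ᵥ V) - V) (V' - V) :=
  calc V' - V = c + γ • (K *ᵥ V') - V := congrArg (· - V) hV'
    _ = c + γ • (K *ᵥ V) - V + γ • (K *ᵥ (V' - V)) := by rw [mulVec_sub]; module

lemma IsDiscountedValue.norm_le (hV : IsDiscountedValue γ K c V) (hγ0 : 0 ≤ γ) (hγ1 : γ < 1)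
    (hK : ∀ s, K s ∈ stdSimplex ℝ S) : ‖V‖ ≤ ‖c‖ / (1 - γ) := by
  have h : ‖V‖ ≤ ‖c‖ + γ * ‖V‖ :=
    calc ‖V‖ = ‖c + γ • (K *ᵥ V)‖ := congrArg norm hV
      _ ≤ ‖c‖ + ‖γ • (K *ᵥ V)‖ := norm_add_le _ _
      _ = ‖c‖ + γ * ‖K *ᵥ V‖ := by rw [norm_smul, Real.norm_of_nonneg hγ0]
      _ ≤ ‖c‖ + γ * ‖V‖ := by gcongr; exact norm_mulVec_le_of_mem_stdSimplex hK V
  rw [le_div_iff₀ (sub_pos.2 hγ1)]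
  linarith

namespace IsDiscountedVisitation

lemma sum_eq_one (hd : IsDiscountedVisitation γ ρ K d) (hγ1 : γ < 1) (hρ : ∑ s, ρ s = 1)
    (hK : ∀ s, ∑ s', K s s' = 1) : ∑ s, d s = 1 := by
  have h : ∑ s, d s = (1 - γ) + γ * ∑ s, d s :=
    calc ∑ s, d s = ∑ s, ((1 - γ) * ρ s + γ * (d ᵥ* K) s) :=
          Finset.sum_congr rfl fun s _ ↦ congrFun hd s
      _ = (1 - γ) + γ * ∑ s, d s := by
          rw [Finset.sum_add_distrib, ← Finset.mul_sum, ← Finset.mul_sum, hρ, mul_one,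
            sum_vecMul_of_row_sum_eq_one hK]
  exact mul_left_cancel₀ (sub_pos.2 hγ1).ne' (by linarith)

lemma sum_abs_le_one (hd : IsDiscountedVisitation γ ρ K d) (hγ0 : 0 ≤ γ) (hγ1 : γ < 1)
    (hρ : ρ ∈ stdSimplex ℝ S) (hK : ∀ s, K s ∈ stdSimplex ℝ S) : ∑ s, |d s| ≤ 1 := by
  have hγ : 0 < 1 - γ := sub_pos.2 hγ1
  have h : ∑ s, |d s| ≤ (1 - γ) + γ * ∑ s, |d s| :=
    calc ∑ s, |d s| = ∑ s, |(1 - γ) * ρ s + γ * (d ᵥ* K) s| :=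
          Finset.sum_congr rfl fun s _ ↦ congrArg abs (congrFun hd s)
      _ ≤ ∑ s, ((1 - γ) * |ρ s| + γ * |(d ᵥ* K) s|) := by
          gcongr with s
          refine (abs_add_le _ _).trans_eq ?_
          rw [abs_mul, abs_mul, abs_of_pos hγ, abs_of_nonneg hγ0]
      _ = (1 - γ) + γ * ∑ s, |(d ᵥ* K) s| := by
          rw [Finset.sum_add_distrib, ← Finset.mul_sum, ← Finset.mul_sum,
            sum_abs_of_mem_stdSimplex hρ, mul_one]
      _ ≤ (1 - γ) + γ * ∑ s, |d s| := by
          grw [sum_abs_vecMul_le_of_mem_stdSimplex hK d]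
  exact le_of_mul_le_mul_left (by linarith) hγ

-- A real vector whose `ℓ¹` norm is at most the sum of its entries has no negative entry.
lemma mem_stdSimplex (hd : IsDiscountedVisitation γ ρ K d) (hγ0 : 0 ≤ γ) (hγ1 : γ < 1)
    (hρ : ρ ∈ stdSimplex ℝ S) (hK : ∀ s, K s ∈ stdSimplex ℝ S) : d ∈ stdSimplex ℝ S := by
  have hsum := hd.sum_eq_one hγ1 hρ.2 fun s ↦ (hK s).2
  refine ⟨fun s ↦ abs_eq_self.1 ?_, hsum⟩
  have habs : ∑ s, d s = ∑ s, |d s| :=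
    le_antisymm (Finset.sum_le_sum fun s _ ↦ le_abs_self (d s))
      (hsum ▸ hd.sum_abs_le_one hγ0 hγ1 hρ hK)
  have hentry := (Finset.sum_eq_sum_iff_of_le fun s _ ↦ le_abs_self (d s)).1 habs
  exact (hentry s (Finset.mem_univ s)).symm

theorem one_sub_mul_dotProduct (hd : IsDiscountedVisitation γ ρ K d)
    (hV : IsDiscountedValue γ K' c V) :
    (1 - γ) * ρ ⬝ᵥ V = d ⬝ᵥ c + γ * d ⬝ᵥ ((K' - K) *ᵥ V) := by
  have hflow : d ⬝ᵥ V = (1 - γ) * ρ ⬝ᵥ V + γ * d ⬝ᵥ (K *ᵥ V) :=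
    calc d ⬝ᵥ V = ((1 - γ) • ρ + γ • (d ᵥ* K)) ⬝ᵥ V := congrArg (· ⬝ᵥ V) hd
      _ = (1 - γ) * ρ ⬝ᵥ V + γ * d ⬝ᵥ (K *ᵥ V) := by
        rw [add_dotProduct, smul_dotProduct, smul_dotProduct, dotProduct_mulVec, smul_eq_mul,
          smul_eq_mul]
  have hbellman : d ⬝ᵥ V = d ⬝ᵥ c + γ * d ⬝ᵥ (K' *ᵥ V) :=
    calc d ⬝ᵥ V = d ⬝ᵥ (c + γ • (K' *ᵥ V)) := congrArg (d ⬝ᵥ ·) hV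
      _ = d ⬝ᵥ c + γ * d ⬝ᵥ (K' *ᵥ V) := by
        rw [dotProduct_add, dotProduct_smul, smul_eq_mul]
  rw [sub_mulVec, dotProduct_sub]
  linarith

end IsDiscountedVisitation

end DiscountedChain

section Policy

open Matrix

variable {S A : Type*} [Fintype S] [Fintype A] {γ : ℝ} {P : S → Matrix A S ℝ} {C : S → A → ℝ}
  {π π' : S → A → ℝ} {ρ d V V' : S → ℝ}

/-- The state transition matrix induced by the policy `π`, where `P s a` is the distribution of the
successor state of `s` under the action `a`. -/
def policyTransition (P : S → Matrix A S ℝ) (π : S → A → ℝ) : Matrix S S ℝ :=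
  .of fun s ↦ π s ᵥ* P s

/-- The mean `E_{a ∼ π(·|s)} [f(s, a)]` as a function of the state `s`. -/
def policyMean (π f : S → A → ℝ) (s : S) : ℝ :=
  π s ⬝ᵥ f s

/-- The advantage `Q(s, a) - V(s)`, where `Q` is the one-step lookahead of `V`. -/
def advantage (γ : ℝ) (P : S → Matrix A S ℝ) (C : S → A → ℝ) (V : S → ℝ) (s : S) (a : A) : ℝ :=
  C s a + γ * (P s *ᵥ V) a - V s

lemma policyTransition_mem_stdSimplex (hP : ∀ s a, P s a ∈ stdSimplex ℝ S)
    (hπ : ∀ s, π s ∈ stdSimplex ℝ A) (s : S) : policyTransition P π s ∈ stdSimplex ℝ S :=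
  vecMul_mem_stdSimplex (hπ s) (hP s)

lemma policyTransition_mulVec (P : S → Matrix A S ℝ) (π : S → A → ℝ) (f : S → ℝ) :
    policyTransition P π *ᵥ f = policyMean π fun s ↦ P s *ᵥ f :=
  funext fun s ↦ (dotProduct_mulVec (π s) (P s) f).symm

lemma isDiscountedVisitation_policyTransition_iff :
    IsDiscountedVisitation γ ρ (policyTransition P π) d ↔
      ∀ s, d s = (1 - γ) * ρ s + γ * ∑ s', ∑ a, d s' * π s' a * P s' a s := by
  simp only [IsDiscountedVisitation, funext_iff, policyTransition, vecMul, dotProduct, of_apply,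
    Pi.add_apply, Pi.smul_apply, smul_eq_mul, Finset.mul_sum, mul_assoc]

lemma isDiscountedValue_policyTransition_iff :
    IsDiscountedValue γ (policyTransition P π) (policyMean π C) V ↔
      ∀ s, V s = ∑ a, π s a * (C s a + γ * ∑ s', P s a s' * V s') := by
  simp only [IsDiscountedValue, policyTransition_mulVec, funext_iff, policyMean, mulVec, dotProduct,
    Pi.add_apply, Pi.smul_apply, smul_eq_mul, mul_add, Finset.sum_add_distrib, Finset.mul_sum,
    mul_left_comm γ]

lemma policyTransition_sub_mulVec_le (hP : ∀ s a, P s a ∈ stdSimplex ℝ S) (f : S → ℝ) (s : S) :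
    ((policyTransition P π' - policyTransition P π) *ᵥ f) s
      ≤ 2 * discreteTV (π' s) (π s) * ‖f‖ :=
  calc ((policyTransition P π' - policyTransition P π) *ᵥ f) s
      = (π' s - π s) ⬝ᵥ (P s *ᵥ f) := by
        rw [sub_mulVec, policyTransition_mulVec, policyTransition_mulVec, sub_dotProduct]
        rfl
    _ ≤ 2 * discreteTV (π' s) (π s) * ‖P s *ᵥ f‖ :=
        (le_abs_self _).trans (abs_sub_dotProduct_le_discreteTV ..)
    _ ≤ 2 * discreteTV (π' s) (π s) * ‖f‖ := by
        have hTV := discreteTV_nonneg (π' s) (π s)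
        grw [norm_mulVec_le_of_mem_stdSimplex (hP s) f]

lemma policyMean_advantage (hπ : ∀ s, π s ∈ stdSimplex ℝ A) (V : S → ℝ) :
    policyMean π (advantage γ P C V) = policyMean π C + γ • (policyTransition P π *ᵥ V) - V := by
  rw [policyTransition_mulVec]
  ext s
  simp only [policyMean, advantage, dotProduct, Pi.add_apply, Pi.sub_apply, Pi.smul_apply,
    smul_eq_mul, mul_add, mul_sub, Finset.sum_add_distrib, Finset.sum_sub_distrib,
    ← Finset.sum_mul, (hπ s).2, one_mul, Finset.mul_sum, mul_left_comm γ]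

theorem dotProduct_value_le_surrogate_add_discreteTV (hγ0 : 0 ≤ γ) (hγ1 : γ < 1)
    (hP : ∀ s a, P s a ∈ stdSimplex ℝ S) (hρ : ρ ∈ stdSimplex ℝ S)
    (hπ : ∀ s, π s ∈ stdSimplex ℝ A) (hπ' : ∀ s, π' s ∈ stdSimplex ℝ A)
    (hd : IsDiscountedVisitation γ ρ (policyTransition P π) d)
    (hV' : IsDiscountedValue γ (policyTransition P π') (policyMean π' C) V') (V : S → ℝ) :
    ρ ⬝ᵥ V' ≤ ρ ⬝ᵥ V + 1 / (1 - γ) * d ⬝ᵥ policyMean π' (advantage γ P C V)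
      + 2 * γ * ‖policyMean π' (advantage γ P C V)‖ / (1 - γ) ^ 2
        * ∑ s, d s * discreteTV (π' s) (π s) := by
  set g := policyMean π' (advantage γ P C V) with hg
  have hγ : 0 < 1 - γ := sub_pos.2 hγ1
  have hd_simplex := hd.mem_stdSimplex hγ0 hγ1 hρ (policyTransition_mem_stdSimplex hP hπ)
  have hTV : 0 ≤ ∑ s, d s * discreteTV (π' s) (π s) :=
    Finset.sum_nonneg fun s _ ↦ mul_nonneg (hd_simplex.1 s) (discreteTV_nonneg _ _)
  have hW : IsDiscountedValue γ (policyTransition P π') g (V' - V) := by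
    rw [hg, policyMean_advantage hπ']
    exact hV'.sub_of_bellman_residual V
  have hW_norm := hW.norm_le hγ0 hγ1 (policyTransition_mem_stdSimplex hP hπ')
  have hshift : d ⬝ᵥ ((policyTransition P π' - policyTransition P π) *ᵥ (V' - V))
      ≤ 2 * ‖V' - V‖ * ∑ s, d s * discreteTV (π' s) (π s) := by
    rw [Finset.mul_sum]
    refine Finset.sum_le_sum fun s _ ↦ ?_
    linarith [mul_le_mul_of_nonneg_left
      (policyTransition_sub_mulVec_le (π := π) (π' := π') hP (V' - V) s) (hd_simplex.1 s)]
  have hdiff : (1 - γ) * (ρ ⬝ᵥ V' - ρ ⬝ᵥ V)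
      ≤ d ⬝ᵥ g + γ * (2 * (‖g‖ / (1 - γ)) * ∑ s, d s * discreteTV (π' s) (π s)) := by
    rw [← dotProduct_sub, hd.one_sub_mul_dotProduct hW]
    gcongr
    refine hshift.trans ?_
    gcongr
  rw [← le_div_iff₀' hγ] at hdiff
  calc ρ ⬝ᵥ V' ≤ ρ ⬝ᵥ V + (d ⬝ᵥ g
        + γ * (2 * (‖g‖ / (1 - γ)) * ∑ s, d s * discreteTV (π' s) (π s))) / (1 - γ) := by
        linarith
    _ = _ := by field_simp; ring

end Policy

/-- CPO trust-region safety guarantee: if the new policy satisfies the surrogate cost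
constraint and an average-KL trust region of radius δ, then its cost return exceeds the
threshold by at most √(2δ) γ ε_C / (1−γ)². -/
theorem cpo_trust_region_safety
    {S A : Type*} [Fintype S] [Fintype A] [Nonempty S]
    (γ : ℝ) (hγ0 : 0 ≤ γ) (hγ1 : γ < 1)
    (P : S → A → S → ℝ) (hPnn : ∀ s a s', 0 ≤ P s a s')
    (hP1 : ∀ s a, ∑ s', P s a s' = 1)
    (C : S → A → ℝ) (ρ : S → ℝ) (hρnn : ∀ s, 0 ≤ ρ s) (hρ1 : ∑ s, ρ s = 1)
    (πk πk1 : S → A → ℝ)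
    (hπknn : ∀ s a, 0 ≤ πk s a) (hπk1 : ∀ s, ∑ a, πk s a = 1)
    (hπk1nn : ∀ s a, 0 ≤ πk1 s a) (hπk11 : ∀ s, ∑ a, πk1 s a = 1)
    (hac : ∀ s a, πk s a = 0 → πk1 s a = 0)
    (VC VC' : S → ℝ)
    (hVC : ∀ s, VC s = ∑ a, πk s a * (C s a + γ * ∑ s', P s a s' * VC s'))
    (hVC' : ∀ s, VC' s = ∑ a, πk1 s a * (C s a + γ * ∑ s', P s a s' * VC' s'))
    (AdvC : S → A → ℝ)
    (hAC : ∀ s a, AdvC s a = (C s a + γ * ∑ s', P s a s' * VC s') - VC s)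
    (dvis : S → ℝ)
    (hd : ∀ s, dvis s = (1 - γ) * ρ s + γ * ∑ s'', ∑ a, dvis s'' * πk s'' a * P s'' a s)
    (JC JC' : ℝ) (hJC : JC = ∑ s, ρ s * VC s) (hJC' : JC' = ∑ s, ρ s * VC' s)
    (εC : ℝ) (hεC : εC = ⨆ s, |∑ a, πk1 s a * AdvC s a|)
    (d δ : ℝ) (hδ : 0 ≤ δ)
    (hsurr : JC + (1 / (1 - γ)) * ∑ s, dvis s * ∑ a, πk1 s a * AdvC s a ≤ d)
    (hKL : ∑ s, dvis s * ∑ a, πk1 s a * Real.log (πk1 s a / πk s a) ≤ δ) :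
    JC' ≤ d + Real.sqrt (2 * δ) * γ * εC / (1 - γ) ^ 2 := by
  have hP s a : P s a ∈ stdSimplex ℝ S := ⟨hPnn s a, hP1 s a⟩
  have hρ : ρ ∈ stdSimplex ℝ S := ⟨hρnn, hρ1⟩
  have hπ s : πk s ∈ stdSimplex ℝ A := ⟨hπknn s, hπk1 s⟩
  have hπ' s : πk1 s ∈ stdSimplex ℝ A := ⟨hπk1nn s, hπk11 s⟩
  have hvisit := isDiscountedVisitation_policyTransition_iff.2 hd
  have hvalue := isDiscountedValue_policyTransition_iff.2 hVC'
  obtain rfl : AdvC = advantage γ P C VC := funext₂ hAC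
  subst hJC hJC'
  have hε : ‖policyMean πk1 (advantage γ P C VC)‖ ≤ εC := by
    rw [hεC, pi_norm_le_iff_of_nonempty]
    exact le_ciSup (Set.finite_range fun s ↦ ‖policyMean πk1 (advantage γ P C VC) s‖).bddAbove
  have hTV : ∑ s, dvis s * discreteTV (πk1 s) (πk s) ≤ √(δ / 2) :=
    sum_mul_discreteTV_le_sqrt (hvisit.mem_stdSimplex hγ0 hγ1 hρ
      (policyTransition_mem_stdSimplex hP hπ)) hπ' hπ hac hKL
  have hsqrt : √(2 * δ) = 2 * √(δ / 2) := by
    rw [show 2 * δ = 2 ^ 2 * (δ / 2) by ring, Real.sqrt_mul (by positivity),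
      Real.sqrt_sq zero_le_two]
  have hbound :=
    dotProduct_value_le_surrogate_add_discreteTV hγ0 hγ1 hP hρ hπ hπ' hvisit hvalue VC
  grw [hTV, hε] at hbound
  calc _ ≤ d + 2 * γ * εC / (1 - γ) ^ 2 * √(δ / 2) := hbound.trans (add_le_add_left hsurr _)
    _ = d + √(2 * δ) * γ * εC / (1 - γ) ^ 2 := by rw [hsqrt]; ring
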